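/- arXiv:1902.07408 — 2 statements merged into one kernel-verified Lean document; each statement's English description precedes it below -/
import Mathlib

section
/- Let A ⊆ F_{2^n} × F_{2^n} satisfy |A| >= n^3 · 2^n, and let W = {(x, αx) : x ∈ F_{2^n}} for uniformly random α ∈ F_{2^n}. Then with probability at least 1 - 1/n^2 over α, the sumset W + A covers all but at most 2^{2n}/n points of F_{2^n} × F_{2^n}. -/
open Classical

/-!
A point `u` is covered by `W + A` exactly when some `a ∈ A` lies on the line of slope `α` through
`u`, that is, when `a` and `u` have the same intercept `u.2 - α * u.1`. For a random slope two
distinct points have the same intercept with probability at most `1 / |K|`, so these intercepts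
form a universal hash family `K × K → K`. Few expected collisions force, by Cauchy–Schwarz, the
image of a large set `A` to miss few intercepts on average, and Markov's inequality concludes.
-/

open Finset

section Markov

variable {ι : Type*}

theorem card_filter_lt_mul_le_sum (s : Finset ι) {f : ι → ℝ} (hf : ∀ i ∈ s, 0 ≤ f i) (t : ℝ) :
    #{i ∈ s | t < f i} * t ≤ ∑ i ∈ s, f i :=
  calc (#{i ∈ s | t < f i} : ℝ) * t = #{i ∈ s | t < f i} • t := (nsmul_eq_mul _ _).symm
    _ ≤ ∑ i ∈ s with t < f i, f i :=
      card_nsmul_le_sum _ _ _ fun _ hi => (mem_filter.mp hi).2.le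
    _ ≤ ∑ i ∈ s, f i :=
      sum_le_sum_of_subset_of_nonneg (filter_subset _ _) fun i hi _ => hf i hi

theorem one_sub_inv_mul_card_le_card_filter_le (s : Finset ι) {f : ι → ℝ}
    (hf : ∀ i ∈ s, 0 ≤ f i) {t r : ℝ} (ht : 0 < t) (hr : 0 < r)
    (hsum : (∑ i ∈ s, f i) * r ≤ #s * t) :
    (1 - 1 / r) * #s ≤ #{i ∈ s | f i ≤ t} := by
  have split_card : (#{i ∈ s | f i ≤ t} : ℝ) + #{i ∈ s | t < f i} = #s := by
    simpa only [not_le, ← Nat.cast_add] using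
      congrArg (Nat.cast : ℕ → ℝ) (card_filter_add_card_filter_not (s := s) fun i => f i ≤ t)
  have card_exceeding : (#{i ∈ s | t < f i} : ℝ) ≤ #s / r := by
    rw [le_div_iff₀ hr]
    refine le_of_mul_le_mul_right ?_ ht
    calc #{i ∈ s | t < f i} * r * t = #{i ∈ s | t < f i} * t * r := by ring
      _ ≤ (∑ i ∈ s, f i) * r := by gcongr; exact card_filter_lt_mul_le_sum s hf t
      _ ≤ #s * t := hsum
  rw [sub_mul, one_mul, one_div_mul_eq_div]
  linarith

end Markov

section Collisions

variable {X T : Type*} [DecidableEq T]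

/-- The ordered pairs of elements of `A` on which `f` takes the same value. The diagonal pairs
are included, so that the number of collisions is the sum of the squared fibre sizes. -/
def collisions (f : X → T) (A : Finset X) : Finset (X × X) :=
  {p ∈ A ×ˢ A | f p.1 = f p.2}

theorem card_collisions (f : X → T) (A : Finset X) :
    #(collisions f A) = ∑ t ∈ A.image f, #{a ∈ A | f a = t} ^ 2 := by
  have maps_to : (collisions f A : Set (X × X)).MapsTo (fun p => f p.1) (A.image f) := fun p hp =>
    mem_image_of_mem f (mem_product.mp (mem_filter.mp hp).1).1
  rw [card_eq_sum_card_fiberwise maps_to]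
  refine sum_congr rfl fun t _ => ?_
  rw [sq, ← card_product]
  congr 1
  ext ⟨a, b⟩
  simp only [collisions, mem_filter, mem_product]
  grind

theorem card_sq_le_card_image_mul_card_collisions (f : X → T) (A : Finset X) :
    #A ^ 2 ≤ #(A.image f) * #(collisions f A) := by
  rw [card_collisions, card_eq_sum_card_image f A]
  exact sq_sum_le_card_mul_sum_sq

theorem card_compl_image_mul_card_sq_le [Fintype T] (f : X → T) (A : Finset X) :
    (#(A.image f)ᶜ + Fintype.card T) * #A ^ 2 ≤ Fintype.card T ^ 2 * #(collisions f A) := by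
  have card_T : #(A.image f) + #(A.image f)ᶜ = Fintype.card T := card_add_card_compl _
  calc (#(A.image f)ᶜ + Fintype.card T) * #A ^ 2
      ≤ (#(A.image f)ᶜ + Fintype.card T) * (#(A.image f) * #(collisions f A)) := by
        gcongr; exact card_sq_le_card_image_mul_card_collisions f A
    _ = (#(A.image f)ᶜ + Fintype.card T) * #(A.image f) * #(collisions f A) :=
        (mul_assoc _ _ _).symm
    _ ≤ Fintype.card T ^ 2 * #(collisions f A) := by
        -- As `#(A.image f) = |T| - N` with `N = #(A.image f)ᶜ`, this is `|T|² - N² ≤ |T|²`.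
        gcongr
        rw [← card_T]
        nlinarith

end Collisions

section UniversalHash

variable {ι X T : Type*} [Fintype ι] [Fintype T] [DecidableEq T]

/-- A family of functions `h i : X → T` is a universal hash family if any two distinct points
collide with probability at most `1 / |T|` over a uniformly random index `i`. The denominators
are cleared so that the condition compares natural numbers. -/
def IsUniversalHash (h : ι → X → T) : Prop :=
  ∀ ⦃x y⦄, x ≠ y → Fintype.card T * #{i | h i x = h i y} ≤ Fintype.card ι

namespace IsUniversalHash

variable {h : ι → X → T}

theorem card_mul_sum_card_collisions_le (hh : IsUniversalHash h) (A : Finset X) :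
    Fintype.card T * ∑ i, #(collisions (h i) A) ≤
      Fintype.card ι * (#A ^ 2 + Fintype.card T * #A) := by
  classical
  have pair_bound (p : X × X) : Fintype.card T * #{i | h i p.1 = h i p.2} ≤
      Fintype.card ι + if p.1 = p.2 then Fintype.card T * Fintype.card ι else 0 := by
    split_ifs with hp
    · simp [hp]
    · exact hh hp
  calc Fintype.card T * ∑ i, #(collisions (h i) A)
      = ∑ p ∈ A ×ˢ A, Fintype.card T * #{i | h i p.1 = h i p.2} := by
        rw [← mul_sum]
        exact congrArg _ (sum_card_bipartiteAbove_eq_sum_card_bipartiteBelow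
          fun i (p : X × X) => h i p.1 = h i p.2)
    _ ≤ ∑ p ∈ A ×ˢ A,
          (Fintype.card ι + if p.1 = p.2 then Fintype.card T * Fintype.card ι else 0) :=
        sum_le_sum fun p _ => pair_bound p
    _ = Fintype.card ι * (#A ^ 2 + Fintype.card T * #A) := by
        rw [sum_add_distrib, sum_const, card_product, sum_product]
        simp only [sum_ite_eq, sum_ite_mem, inter_self, sum_const, smul_eq_mul]
        ring

theorem sum_card_compl_image_mul_card_le (hh : IsUniversalHash h) (A : Finset X) :
    (∑ i, #(A.image (h i))ᶜ) * #A ≤ Fintype.card ι * Fintype.card T ^ 2 := by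
  obtain rfl | hA := A.eq_empty_or_nonempty
  · simp
  refine Nat.le_of_mul_le_mul_right ?_ hA.card_pos
  have sum_bound : ∑ i, (#(A.image (h i))ᶜ + Fintype.card T) * #A ^ 2 ≤
      Fintype.card T * (Fintype.card ι * (#A ^ 2 + Fintype.card T * #A)) :=
    calc ∑ i, (#(A.image (h i))ᶜ + Fintype.card T) * #A ^ 2
        ≤ ∑ i, Fintype.card T ^ 2 * #(collisions (h i) A) :=
          sum_le_sum fun i _ => card_compl_image_mul_card_sq_le (h i) A
      _ = Fintype.card T * (Fintype.card T * ∑ i, #(collisions (h i) A)) := by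
          rw [← mul_sum, sq, mul_assoc]
      _ ≤ Fintype.card T * (Fintype.card ι * (#A ^ 2 + Fintype.card T * #A)) :=
          Nat.mul_le_mul_left _ (hh.card_mul_sum_card_collisions_le A)
  rw [← sum_mul, sum_add_distrib, sum_const, card_univ, smul_eq_mul] at sum_bound
  linarith

end IsUniversalHash

end UniversalHash

section Lines

variable {K : Type*} [Ring K]

/-- The intercept of the line of slope `α` through the point `u` of the plane `K × K`. -/
def intercept (α : K) (u : K × K) : K :=
  u.2 - α * u.1

theorem intercept_eq_intercept_iff {α : K} {u v : K × K} :
    intercept α u = intercept α v ↔ u.2 - v.2 = α * (u.1 - v.1) := by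
  rw [intercept, intercept, sub_eq_sub_iff_sub_eq_sub, mul_sub]

theorem exists_eq_add_iff_intercept_eq {α : K} {u a : K × K} :
    (∃ x, u = (x, α * x) + a) ↔ intercept α a = intercept α u := by
  rw [eq_comm, intercept_eq_intercept_iff]
  constructor
  · rintro ⟨x, rfl⟩
    simp
  · intro hu
    exact ⟨u.1 - a.1, Prod.ext (sub_add_cancel _ _).symm (sub_eq_iff_eq_add.mp hu)⟩

variable [Fintype K] [DecidableEq K]

theorem isUniversalHash_intercept [NoZeroDivisors K] :
    IsUniversalHash (intercept : K → K × K → K) := by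
  intro u v huv
  suffices #{α | intercept α u = intercept α v} ≤ 1 from
    (Nat.mul_le_mul_left _ this).trans_eq (mul_one _)
  refine card_le_one.mpr fun α hα β hβ => ?_
  rw [mem_filter_univ, intercept_eq_intercept_iff] at hα hβ
  have fst_ne : u.1 - v.1 ≠ 0 := fun h =>
    huv (Prod.ext (sub_eq_zero.mp h) (sub_eq_zero.mp (by rw [hα, h, mul_zero])))
  exact mul_right_cancel₀ fst_ne (hα.symm.trans hβ)

theorem card_filter_intercept_mem (α : K) (S : Finset K) :
    #{u | intercept α u ∈ S} = Fintype.card K * #S := by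
  rw [← card_univ, ← card_product]
  exact card_equiv (Equiv.prodShear (.refl K) fun x => .subRight (α * x)) fun u => by
    rw [mem_filter_univ]
    simp [intercept]

end Lines

section Wozencraft

variable {K : Type*} [Ring K] [Fintype K]

/-- The points of `K × K` outside the sumset `W + A`, where `W = {(x, α * x) : x ∈ K}` is the
line of slope `α` through the origin. -/
noncomputable def uncovered (A : Finset (K × K)) (α : K) : Finset (K × K) :=
  {u | ¬∃ x : K, ∃ a ∈ A, u = (x, α * x) + a}

theorem uncovered_eq_filter_intercept (A : Finset (K × K)) (α : K) :
    uncovered A α = ({u | intercept α u ∈ (A.image (intercept α))ᶜ} : Finset (K × K)) := by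
  refine filter_congr fun u _ => ?_
  rw [mem_compl, mem_image, exists_comm]
  simp only [exists_and_left, exists_eq_add_iff_intercept_eq]

theorem sum_card_uncovered_mul_card_le [NoZeroDivisors K] (A : Finset (K × K)) :
    (∑ α, #(uncovered A α)) * #A ≤ Fintype.card K ^ 4 := by
  simp only [uncovered_eq_filter_intercept, card_filter_intercept_mem, ← mul_sum]
  calc Fintype.card K * (∑ α, #(A.image (intercept α))ᶜ) * #A
      = Fintype.card K * ((∑ α, #(A.image (intercept α))ᶜ) * #A) := mul_assoc _ _ _
    _ ≤ Fintype.card K * (Fintype.card K * Fintype.card K ^ 2) :=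
        Nat.mul_le_mul_left _ (isUniversalHash_intercept.sum_card_compl_image_mul_card_le A)
    _ = Fintype.card K ^ 4 := by ring

end Wozencraft

theorem stmt_12_general {K : Type*} [Ring K] [NoZeroDivisors K] [Fintype K] {r s : ℝ}
    (hr : 0 < r) (hs : 0 < s) (A : Finset (K × K)) (hA : r * s * Fintype.card K ≤ #A) :
    (1 - 1 / r) * Fintype.card K ≤
      (#{α : K | (#(uncovered A α) : ℝ) ≤ (Fintype.card K : ℝ) ^ 2 / s} : ℝ) := by
  have card_pos : (0 : ℝ) < Fintype.card K := Nat.cast_pos.mpr Fintype.card_pos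
  refine one_sub_inv_mul_card_le_card_filter_le univ (fun α _ => Nat.cast_nonneg _)
    (by positivity) hr ?_
  rw [card_univ, mul_div_assoc', le_div_iff₀ hs]
  refine le_of_mul_le_mul_right ?_ card_pos
  calc (∑ α, (#(uncovered A α) : ℝ)) * r * s * Fintype.card K
      = (∑ α, (#(uncovered A α) : ℝ)) * (r * s * Fintype.card K) := by ring
    _ ≤ (∑ α, (#(uncovered A α) : ℝ)) * #A := by gcongr
    _ ≤ (Fintype.card K : ℝ) ^ 4 := mod_cast sum_card_uncovered_mul_card_le A
    _ = Fintype.card K * (Fintype.card K : ℝ) ^ 2 * Fintype.card K := by ring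

/-- For a field `K` with `2^n` elements and a subset `A ⊆ K × K` with
`|A| ≥ n³·2^n`: with probability at least `1 - 1/n²` over a uniformly random
`α ∈ K`, the sumset `W + A` of the Wozencraft code `W = {(x, αx) : x ∈ K}`
with `A` covers all but at most `2^{2n}/n` points of `K × K`. -/
theorem stmt_12 (n : ℕ) (hn : 0 < n) {K : Type*} [Field K] [Fintype K]
    (hK : Fintype.card K = 2 ^ n) (A : Finset (K × K))
    (hA : ((n : ℝ) ^ 3 * 2 ^ n) ≤ (A.card : ℝ)) :
    (1 - 1 / (n : ℝ) ^ 2) * (Fintype.card K : ℝ) ≤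
      ((Finset.univ.filter (fun α : K =>
          ((Finset.univ.filter (fun u : K × K =>
              ¬∃ x : K, ∃ a ∈ A, u = (x, α * x) + a)).card : ℝ) ≤
            (2 ^ (2 * n) : ℝ) / (n : ℝ))).card : ℝ) := by
  have hn' : (0 : ℝ) < n := Nat.cast_pos.mpr hn
  have general := stmt_12_general (pow_pos hn' 2) hn' A (by simpa [hK, ← pow_succ] using hA)
  simpa only [uncovered, hK, Nat.cast_pow, Nat.cast_ofNat, ← pow_mul, mul_comm n 2] using general
end

section
/- Let A = B_r ⊆ F_2^{2n} be the Hamming ball of radius r <= n/2 centered at 0, and let S = {(a_1, a_2) ∈ A × A : a_1 ≠ a_2 and the first n coordinates of a_1 and a_2 agree}. Then |S| <= binom(n, floor(n/2)) · |A|. -/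
open Classical

/-! Cut a point of the ball at the middle into `(x, y)`. Since `∑ y, 2 ^ (-|y|) = (3 / 2) ^ n`, the
Cauchy–Schwarz inequality bounds the squared size of the fibre over `x` by `(3 / 2) ^ n` times the
sum of `2 ^ |y|` over that fibre. So the number of agreeing pairs, diagonal included, is at most
`(3 / 2) ^ n` times the sum of `2 ^ |y|` over the ball. The average of `2 ^ |y|` over a sphere of
radius `s` in `𝔽₂²ⁿ` is at most `(3 / 2) ^ s`, because `(1 + X) (1 + 2 X)` is coefficientwise below
`(1 + 3 / 2 X) ^ 2`. Altogether there are at most `(3 / 2) ^ (n + r)` agreeing pairs per point of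
the ball, and `(3 / 2) ^ (n + n / 2) ≤ n.choose (n / 2)` once `n ≥ 21`. The remaining `n` are
checked by evaluating the exact count. -/

open Finset

/-- The number of points of `𝔽₂ⁿ` of Hamming norm less than `k`. The strict inequality makes the
fibres of a ball over a point `x` balls of parameter `k - |x|`, also when the truncated subtraction
gives the empty ball. -/
def hammingBallCard (n k : ℕ) : ℕ := ∑ j ∈ range k, n.choose j

/-- The number of ordered pairs of points of `𝔽₂ᵐ⁺ⁿ`, both of Hamming norm less than `k`, that agree
on the first `m` coordinates, counted by the norm `i` of the common first part. -/
def agreeingPairCard (m n k : ℕ) : ℕ := ∑ i ∈ range k, m.choose i * hammingBallCard n (k - i) ^ 2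

section Counting

theorem card_filter_product_apply_eq {α β : Type*} [Fintype β] [DecidableEq β] (A : Finset α)
    (f : α → β) :
    #{q ∈ A ×ˢ A | f q.1 = f q.2} = ∑ b, #{a ∈ A | f a = b} ^ 2 := by
  rw [card_eq_sum_card_fiberwise (f := fun q ↦ f q.1) (t := univ) fun _ _ ↦ mem_coe.2 <| mem_univ _]
  refine sum_congr rfl fun b _ ↦ ?_
  rw [sq, ← card_product]
  congr 1
  ext ⟨a, a'⟩
  simp only [mem_filter, mem_product]
  grind

theorem card_filter_ne_and_add_card {α : Type*} [DecidableEq α] (A : Finset α)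
    {R : α → α → Prop} [DecidableRel R] (hR : ∀ a, R a a) :
    #{q ∈ A ×ˢ A | q.1 ≠ q.2 ∧ R q.1 q.2} + #A = #{q ∈ A ×ˢ A | R q.1 q.2} := by
  have hdiag : {q ∈ {q ∈ A ×ˢ A | R q.1 q.2} | ¬q.1 ≠ q.2} = A.diag := by
    ext ⟨a, a'⟩
    simp only [mem_filter, mem_product, mem_diag, not_not]
    grind
  rw [← card_filter_add_card_filter_not (s := {q ∈ A ×ˢ A | R q.1 q.2}) (fun q ↦ q.1 ≠ q.2), hdiag,
    diag_card, filter_filter]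
  simp only [and_comm]

variable {ι : Type*} [Fintype ι]

theorem hammingNorm_restrict_add_hammingNorm_restrict_not {β : Type*} [Zero β] [DecidableEq β]
    (p : ι → Prop) [DecidablePred p] (a : ι → β) :
    hammingNorm (fun i : {i // p i} ↦ a i) + hammingNorm (fun i : {i // ¬p i} ↦ a i) =
      hammingNorm a := by
  simp only [hammingNorm, card_filter]
  exact Fintype.sum_subtype_add_sum_subtype p fun i ↦ if a i ≠ 0 then 1 else 0

variable [DecidableEq ι]

theorem card_hammingNorm_eq (k : ℕ) :
    #{x : ι → ZMod 2 | hammingNorm x = k} = (Fintype.card ι).choose k := by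
  have eq_one_of_ne_zero : ∀ a : ZMod 2, a ≠ 0 → a = 1 := by decide
  rw [← card_univ, ← card_powersetCard]
  refine card_nbij' (fun x ↦ univ.filter fun i ↦ x i ≠ 0) (fun s i ↦ if i ∈ s then 1 else 0)
    ?_ ?_ ?_ ?_
  · intro x hx
    simpa [hammingNorm, mem_powersetCard] using hx
  · intro s hs
    simpa [hammingNorm, mem_powersetCard] using hs
  · intro x _
    funext i
    by_cases hi : x i = 0
    · simp [hi]
    · simp [eq_one_of_ne_zero _ hi]
  · intro s _
    ext i
    simp

theorem sum_hammingNorm_lt {M : Type*} [AddCommMonoid M] (k : ℕ) (f : ℕ → M) :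
    ∑ x : ι → ZMod 2 with hammingNorm x < k, f (hammingNorm x) =
      ∑ i ∈ range k, (Fintype.card ι).choose i • f i := by
  rw [← sum_fiberwise_of_maps_to (t := range k) (g := hammingNorm) (by simp)]
  refine sum_congr rfl fun i hi ↦ ?_
  have hfiber : ({x | hammingNorm x < k ∧ hammingNorm x = i} : Finset (ι → ZMod 2)) =
      ({x | hammingNorm x = i} : Finset (ι → ZMod 2)) :=
    filter_congr fun x _ ↦ and_iff_right_of_imp fun h ↦ h ▸ mem_range.1 hi
  rw [filter_filter, hfiber, sum_congr rfl fun x hx ↦ by rw [(mem_filter.1 hx).2], sum_const,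
    card_hammingNorm_eq]

theorem card_hammingNorm_lt (k : ℕ) :
    #{x : ι → ZMod 2 | hammingNorm x < k} = hammingBallCard (Fintype.card ι) k := by
  simpa only [hammingBallCard, card_eq_sum_ones, nsmul_eq_mul, Nat.cast_id, mul_one] using
    sum_hammingNorm_lt (ι := ι) k fun _ ↦ (1 : ℕ)

theorem card_hammingNorm_lt_and_restrict_eq (p : ι → Prop) [DecidablePred p]
    (x : {i // p i} → ZMod 2) (k : ℕ) :
    #{a : ι → ZMod 2 | hammingNorm a < k ∧ (fun i : {i // p i} ↦ a i) = x} =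
      hammingBallCard (Fintype.card {i // ¬p i}) (k - hammingNorm x) := by
  rw [← card_hammingNorm_lt]
  have split (a : ι → ZMod 2) := hammingNorm_restrict_add_hammingNorm_restrict_not p a
  let glue (y : {i // ¬p i} → ZMod 2) := (Equiv.piEquivPiSubtypeProd p fun _ ↦ ZMod 2).symm (x, y)
  have glue_restrict (y) : (fun i : {i // p i} ↦ glue y i) = x := by
    funext i
    simp [glue, i.2]
  have glue_restrict_not (y) : (fun i : {i // ¬p i} ↦ glue y i) = y := by
    funext i
    simp [glue, i.2]
  refine card_nbij' (fun a i ↦ a i) glue ?_ ?_ ?_ ?_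
  · intro a ha
    obtain ⟨hak, rfl⟩ : hammingNorm a < k ∧ _ := by simpa using ha
    have hsplit := split a
    dsimp only at hsplit ⊢
    exact mem_coe.2 (mem_filter.2 ⟨mem_univ _, by omega⟩)
  · intro y hy
    have hyk : hammingNorm y < k - hammingNorm x := by simpa using hy
    have hsplit := split (glue y)
    rw [glue_restrict, glue_restrict_not] at hsplit
    exact mem_coe.2 (mem_filter.2 ⟨mem_univ _, by omega, glue_restrict y⟩)
  · intro a ha
    obtain ⟨-, rfl⟩ : hammingNorm a < k ∧ _ := by simpa using ha
    exact (Equiv.piEquivPiSubtypeProd p fun _ ↦ ZMod 2).symm_apply_apply a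
  · exact fun y _ ↦ glue_restrict_not y

theorem card_filter_product_agree (p : ι → Prop) [DecidablePred p] (k : ℕ) :
    #{q ∈ ({a : ι → ZMod 2 | hammingNorm a < k} : Finset _) ×ˢ
          ({a : ι → ZMod 2 | hammingNorm a < k} : Finset _) | ∀ i, p i → q.1 i = q.2 i} =
      agreeingPairCard (Fintype.card {i // p i}) (Fintype.card {i // ¬p i}) k := by
  have agree_iff (a b : ι → ZMod 2) : (∀ i, p i → a i = b i) ↔
      (fun i : {i // p i} ↦ a i) = fun i : {i // p i} ↦ b i := by
    simp [funext_iff]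
  simp only [agree_iff]
  rw [card_filter_product_apply_eq _ fun (a : ι → ZMod 2) (i : {i // p i}) ↦ a i]
  simp only [filter_filter, card_hammingNorm_lt_and_restrict_eq]
  rw [← sum_filter_of_ne (p := fun x : {i // p i} → ZMod 2 ↦ hammingNorm x < k)]
  · simp only [sum_hammingNorm_lt k fun i ↦ hammingBallCard (Fintype.card {i // ¬p i}) (k - i) ^ 2,
      agreeingPairCard, nsmul_eq_mul, Nat.cast_id]
  · intro x _ hx
    by_contra hxk
    exact hx (by simp [hammingBallCard, Nat.sub_eq_zero_of_le (not_lt.1 hxk)])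

end Counting

section Coefficients

open Polynomial

theorem coeff_one_add_C_mul_X_pow {R : Type*} [CommSemiring R] (a : R) (n k : ℕ) :
    ((1 + C a * X) ^ n).coeff k = n.choose k * a ^ k := by
  have hcomp : (1 + C a * X) ^ n = ((1 + X : R[X]) ^ n).comp (C a * X) := by simp
  rw [hcomp, comp_C_mul_X_coeff, coeff_one_add_X_pow]

variable {R : Type*} [Semiring R] [PartialOrder R] [IsOrderedRing R] {p q : R[X]}

theorem coeff_pow_nonneg (hp : ∀ k, 0 ≤ p.coeff k) (n k : ℕ) : 0 ≤ (p ^ n).coeff k := by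
  induction n generalizing k with
  | zero =>
    rw [pow_zero, coeff_one]
    split_ifs <;> simp
  | succ n ih =>
    rw [pow_succ, coeff_mul]
    exact sum_nonneg fun x _ ↦ mul_nonneg (ih _) (hp _)

theorem coeff_pow_le_coeff_pow (hp : ∀ k, 0 ≤ p.coeff k) (hpq : ∀ k, p.coeff k ≤ q.coeff k)
    (n k : ℕ) : (p ^ n).coeff k ≤ (q ^ n).coeff k := by
  induction n generalizing k with
  | zero => simp
  | succ n ih =>
    simp only [pow_succ, coeff_mul]
    exact sum_le_sum fun x _ ↦
      mul_le_mul (ih _) (hpq _) (hp _) ((coeff_pow_nonneg hp _ _).trans (ih _))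

end Coefficients

section WeightedBinomialSums

theorem sum_range_mul_sum_range_sub {R : Type*} [NonUnitalNonAssocSemiring R] (f g : ℕ → R)
    (k : ℕ) :
    ∑ i ∈ range k, f i * ∑ j ∈ range (k - i), g j =
      ∑ s ∈ range k, ∑ x ∈ antidiagonal s, f x.1 * g x.2 := by
  simp only [Nat.sum_antidiagonal_eq_sum_range_succ fun i j ↦ f i * g j, mul_sum,
    sum_range_diag_flip k fun i j ↦ f i * g j]

variable {𝕜 : Type*} [Field 𝕜] [LinearOrder 𝕜] [IsStrictOrderedRing 𝕜]

open Polynomial in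
theorem sum_antidiagonal_choose_mul_pow_le {a b : 𝕜} (ha : 0 ≤ a) (hb : 0 ≤ b) (n s : ℕ) :
    ∑ x ∈ antidiagonal s, (n.choose x.1 * a ^ x.1) * (n.choose x.2 * b ^ x.2) ≤
      (2 * n).choose s * ((a + b) / 2) ^ s := by
  set c := (a + b) / 2 with hc
  have hsq : (1 + C c * X) ^ 2 = (1 + C a * X) * (1 + C b * X) + C (((a - b) / 2) ^ 2) * X ^ 2 := by
    have hsum : a + b = 2 * c := by rw [hc]; ring
    have hprod : c ^ 2 = a * b + ((a - b) / 2) ^ 2 := by rw [hc]; ring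
    have hsumC := congrArg (C : 𝕜 → 𝕜[X]) hsum
    have hprodC := congrArg (C : 𝕜 → 𝕜[X]) hprod
    simp only [C_add, C_mul, C_pow, C_ofNat] at hsumC hprodC ⊢
    linear_combination X ^ 2 * hprodC - X * hsumC
  have hle (k : ℕ) : ((1 + C a * X) * (1 + C b * X)).coeff k ≤ ((1 + C c * X) ^ 2).coeff k := by
    rw [hsq, coeff_add, coeff_C_mul, coeff_X_pow]
    split_ifs <;> simp [sq_nonneg]
  have hnonneg (k : ℕ) : 0 ≤ ((1 + C a * X) * (1 + C b * X)).coeff k := by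
    rw [coeff_mul]
    refine sum_nonneg fun x _ ↦ mul_nonneg ?_ ?_
    · rw [← pow_one (1 + C a * X), coeff_one_add_C_mul_X_pow]
      positivity
    · rw [← pow_one (1 + C b * X), coeff_one_add_C_mul_X_pow]
      positivity
  have h := coeff_pow_le_coeff_pow hnonneg hle n s
  rw [mul_pow, ← pow_mul, coeff_mul] at h
  simpa only [coeff_one_add_C_mul_X_pow] using h

theorem sum_range_choose_mul_pow_le {u : 𝕜} (hu : 0 ≤ u) (n k : ℕ) :
    ∑ j ∈ range k, n.choose j * u ^ j ≤ (1 + u) ^ n := by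
  have hsum : ∑ j ∈ range (n + 1), n.choose j * u ^ j = (1 + u) ^ n := by
    simp [add_comm 1 u, add_pow, mul_comm]
  rw [← hsum, sum_subset (range_mono (le_max_left (n + 1) k)) fun j _ hj ↦ by
    rw [Nat.choose_eq_zero_of_lt (by simpa using hj), Nat.cast_zero, zero_mul]]
  exact sum_le_sum_of_subset_of_nonneg (range_mono (le_max_right _ _)) fun _ _ _ ↦ by positivity

theorem hammingBallCard_sq_le {t : 𝕜} (ht : 0 < t) (n k : ℕ) :
    (hammingBallCard n k : 𝕜) ^ 2 ≤ (1 + t⁻¹) ^ n * ∑ j ∈ range k, n.choose j * t ^ j := by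
  rw [hammingBallCard, Nat.cast_sum]
  calc (∑ j ∈ range k, (n.choose j : 𝕜)) ^ 2
      ≤ (∑ j ∈ range k, n.choose j * t⁻¹ ^ j) * ∑ j ∈ range k, n.choose j * t ^ j :=
        sum_sq_le_sum_mul_sum_of_sq_le_mul _ (fun _ _ ↦ by positivity) (fun _ _ ↦ by positivity)
          fun j _ ↦ by
            rw [mul_mul_mul_comm, ← mul_pow, inv_mul_cancel₀ ht.ne', one_pow, mul_one, sq]
    _ ≤ (1 + t⁻¹) ^ n * ∑ j ∈ range k, n.choose j * t ^ j := by
        gcongr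
        exact sum_range_choose_mul_pow_le (by positivity) n k

theorem agreeingPairCard_le_mul_sum_antidiagonal {t : 𝕜} (ht : 0 < t) (m n k : ℕ) :
    (agreeingPairCard m n k : 𝕜) ≤ (1 + t⁻¹) ^ n *
      ∑ s ∈ range k, ∑ x ∈ antidiagonal s, m.choose x.1 * (n.choose x.2 * t ^ x.2) := by
  rw [← sum_range_mul_sum_range_sub (fun i ↦ (m.choose i : 𝕜)) fun j ↦ n.choose j * t ^ j,
    agreeingPairCard, Nat.cast_sum, mul_sum]
  refine sum_le_sum fun i _ ↦ ?_
  rw [Nat.cast_mul, Nat.cast_pow, mul_left_comm]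
  gcongr
  exact hammingBallCard_sq_le ht n (k - i)

theorem agreeingPairCard_self_le {t : 𝕜} (ht : 1 ≤ t) (n r : ℕ) :
    (agreeingPairCard n n (r + 1) : 𝕜) ≤
      (1 + t⁻¹) ^ n * ((1 + t) / 2) ^ r * hammingBallCard (2 * n) (r + 1) := by
  have ht₀ : 0 < t := one_pos.trans_le ht
  refine (agreeingPairCard_le_mul_sum_antidiagonal ht₀ n n (r + 1)).trans ?_
  rw [mul_assoc, hammingBallCard, Nat.cast_sum, mul_sum (range (r + 1)) _ (((1 + t) / 2) ^ r)]
  gcongr (1 + t⁻¹) ^ n * ?_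
  refine sum_le_sum fun s hs ↦ ?_
  calc ∑ x ∈ antidiagonal s, (n.choose x.1 : 𝕜) * (n.choose x.2 * t ^ x.2)
      ≤ (2 * n).choose s * ((1 + t) / 2) ^ s := by
        simpa using sum_antidiagonal_choose_mul_pow_le zero_le_one ht₀.le n s
    _ ≤ (2 * n).choose s * ((1 + t) / 2) ^ r := by
        gcongr
        · linarith
        · exact Nat.lt_succ_iff.1 (mem_range.1 hs)
    _ = ((1 + t) / 2) ^ r * (2 * n).choose s := mul_comm _ _

end WeightedBinomialSums

section MiddleBinomial

theorem three_halves_pow_le_centralBinom {m : ℕ} (hm : 11 ≤ m) :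
    (3 / 2 : ℚ) ^ (3 * m) ≤ m.centralBinom := by
  induction m, hm using Nat.le_induction with
  | base => norm_num [Nat.centralBinom, Nat.choose]
  | succ m hm ih =>
    have hrec : (m + 1 : ℚ) * (m + 1).centralBinom = 2 * (2 * m + 1) * m.centralBinom := by
      exact_mod_cast Nat.succ_mul_centralBinom_succ m
    have hratio : (m + 1 : ℚ) * (27 / 8) ≤ 2 * (2 * m + 1) := by
      have : (11 : ℚ) ≤ m := by exact_mod_cast hm
      linarith
    refine le_of_mul_le_mul_left ?_ (by positivity : (0 : ℚ) < m + 1)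
    calc (m + 1 : ℚ) * (3 / 2) ^ (3 * (m + 1)) = (m + 1) * (27 / 8) * (3 / 2) ^ (3 * m) := by ring
      _ ≤ 2 * (2 * m + 1) * m.centralBinom := by gcongr
      _ = (m + 1) * (m + 1).centralBinom := hrec.symm

theorem centralBinom_succ_eq_two_mul_choose (m : ℕ) :
    (m + 1).centralBinom = 2 * (2 * m + 1).choose m := by
  rw [Nat.centralBinom, mul_add_one, Nat.choose_succ_succ, Nat.choose_symm_half, ← two_mul]

theorem three_halves_pow_le_choose_half {n : ℕ} (hn : 21 ≤ n) :
    (3 / 2 : ℚ) ^ (n + n / 2) ≤ n.choose (n / 2) := by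
  obtain ⟨m, rfl | rfl⟩ := Nat.even_or_odd' n
  · have h := three_halves_pow_le_centralBinom (m := m) (by omega)
    rwa [show 2 * m / 2 = m by omega, show 2 * m + m = 3 * m by ring]
  · have h := three_halves_pow_le_centralBinom (m := m + 1) (by omega)
    rw [centralBinom_succ_eq_two_mul_choose, Nat.cast_mul, Nat.cast_ofNat,
      show 3 * (m + 1) = 3 * m + 1 + 2 by ring, pow_add _ _ 2] at h
    rw [show (2 * m + 1) / 2 = m by omega, show 2 * m + 1 + m = 3 * m + 1 by ring]
    have : (0 : ℚ) < (3 / 2) ^ (3 * m + 1) := by positivity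
    linarith

end MiddleBinomial

theorem agreeingPairCard_le_of_lt_twentyOne :
    ∀ n < 21, ∀ r < n / 2 + 1,
      agreeingPairCard n n (r + 1) ≤ (n.choose (n / 2) + 1) * hammingBallCard (2 * n) (r + 1) := by
  decide +kernel

theorem agreeingPairCard_le_of_twentyOne_le {n r : ℕ} (hn : 21 ≤ n) (hr : 2 * r ≤ n) :
    agreeingPairCard n n (r + 1) ≤ n.choose (n / 2) * hammingBallCard (2 * n) (r + 1) := by
  have hpow : (3 / 2 : ℚ) ^ n * (3 / 2) ^ r ≤ n.choose (n / 2) := by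
    rw [← pow_add]
    refine le_trans ?_ (three_halves_pow_le_choose_half hn)
    gcongr
    · norm_num
    · omega
  have hpairs : (agreeingPairCard n n (r + 1) : ℚ) ≤
      (3 / 2) ^ n * (3 / 2) ^ r * hammingBallCard (2 * n) (r + 1) := by
    rw [← show (1 + 2⁻¹ : ℚ) = 3 / 2 by norm_num]
    nth_rw 2 [show (1 + 2⁻¹ : ℚ) = (1 + 2) / 2 by norm_num]
    exact agreeingPairCard_self_le one_le_two n r
  exact_mod_cast hpairs.trans (mul_le_mul_of_nonneg_right hpow (Nat.cast_nonneg _))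

theorem agreeingPairCard_le {n r : ℕ} (hr : 2 * r ≤ n) :
    agreeingPairCard n n (r + 1) ≤ (n.choose (n / 2) + 1) * hammingBallCard (2 * n) (r + 1) := by
  rcases lt_or_ge n 21 with hn | hn
  · exact agreeingPairCard_le_of_lt_twentyOne n hn r (by omega)
  · exact (agreeingPairCard_le_of_twentyOne_le hn hr).trans (by gcongr; omega)

/-- Let `A` be the Hamming ball of radius `r ≤ n/2` around `0` in `𝔽₂^{2n}`,
and `S` the set of ordered pairs of distinct points of `A` agreeing on the
first `n` coordinates. Then `|S| ≤ C(n, ⌊n/2⌋) · |A|`. -/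
theorem stmt_17 (n r : ℕ) (hr : 2 * r ≤ n)
    (A : Finset (Fin (2 * n) → ZMod 2))
    (hA : A = Finset.univ.filter (fun x => hammingNorm x ≤ r))
    (S : Finset ((Fin (2 * n) → ZMod 2) × (Fin (2 * n) → ZMod 2)))
    (hS : S = (A ×ˢ A).filter (fun p =>
      p.1 ≠ p.2 ∧ ∀ i : Fin (2 * n), (i : ℕ) < n → p.1 i = p.2 i)) :
    S.card ≤ n.choose (n / 2) * A.card := by
  have hball : A = ({a | hammingNorm a < r + 1} : Finset (Fin (2 * n) → ZMod 2)) := by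
    simp only [hA, Nat.lt_succ_iff]
  have hcardA : #A = hammingBallCard (2 * n) (r + 1) := by
    rw [hball, card_hammingNorm_lt, Fintype.card_fin]
  have hfirst : Fintype.card {i : Fin (2 * n) // (i : ℕ) < n} = n := by
    rw [Fintype.card_subtype, Fin.card_filter_val_lt]
    omega
  have hsecond : Fintype.card {i : Fin (2 * n) // ¬(i : ℕ) < n} = n := by
    rw [Fintype.card_subtype_compl, hfirst, Fintype.card_fin]
    omega
  have hpairs : #{q ∈ A ×ˢ A | ∀ i : Fin (2 * n), (i : ℕ) < n → q.1 i = q.2 i} =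
      agreeingPairCard n n (r + 1) := by
    rw [hball]
    convert card_filter_product_agree (fun i : Fin (2 * n) ↦ (i : ℕ) < n) (r + 1)
    exacts [hfirst.symm, hsecond.symm]
  have hdiag : #S + #A = agreeingPairCard n n (r + 1) := by
    rw [hS, ← hpairs]
    exact card_filter_ne_and_add_card A
      (R := fun a b ↦ ∀ i : Fin (2 * n), (i : ℕ) < n → a i = b i) fun _ _ _ ↦ rfl
  have hmain := agreeingPairCard_le hr
  rw [← hcardA, ← hdiag, add_one_mul] at hmain
  exact Nat.le_of_add_le_add_right hmain
end
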